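/- Discrete nodal domain theorem: suppose the weighted graph G is connected, and let f ∈ ℝ^n be an eigenvector of the normalized Laplacian L with eigenvalue λ. Then the number of strong nodal domains of f is at most the number of eigenvalues of L (counted with multiplicity) that are not greater than λ, i.e. at most #{m : λ_m ≤ λ}. -/

import Mathlib

open Matrix BigOperators

/-- Adjacency relation of the weighted graph with adjacency matrix `A`:
`i` and `j` are adjacent if they are distinct and `A i j > 0`. -/
def adjRel {n : ℕ} (A : Matrix (Fin n) (Fin n) ℝ) (i j : Fin n) : Prop :=
  i ≠ j ∧ 0 < A i j

/-- Reachability within the subgraph induced by a vertex subset `P`: `j` is reachable from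
`i` along edges all of whose endpoints lie in `P`. -/
def reachIn {n : ℕ} (A : Matrix (Fin n) (Fin n) ℝ) (P : Set (Fin n)) (i j : Fin n) : Prop :=
  Relation.ReflTransGen (fun a b => a ∈ P ∧ b ∈ P ∧ adjRel A a b) i j

/-- `S` is a strong nodal domain of `f : V → ℝ`: a connected component of the subgraph
induced by `{i | f i > 0}` or by `{i | f i < 0}`. -/
def IsStrongNodalDomain {n : ℕ} (A : Matrix (Fin n) (Fin n) ℝ) (f : Fin n → ℝ)
    (S : Set (Fin n)) : Prop :=
  (∃ i, 0 < f i ∧ S = {j | reachIn A {k | 0 < f k} i j}) ∨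
  (∃ i, f i < 0 ∧ S = {j | reachIn A {k | f k < 0} i j})

/-- The coordinate expansion of a quadratic form of a real Hermitian matrix, shifted by `μ`,
in the orthonormal eigenbasis. -/
theorem Matrix.IsHermitian.dotProduct_mulVec_sub_eq_sum {ι : Type*} [Fintype ι] [DecidableEq ι]
    {L : Matrix ι ι ℝ} (hL : L.IsHermitian) (μ : ℝ) (x : ι → ℝ) :
    x ⬝ᵥ (L *ᵥ x) - μ * (x ⬝ᵥ x) =
      ∑ m, (hL.eigenvalues m - μ) * ((hL.eigenvectorBasis m).ofLp ⬝ᵥ x) ^ 2 := by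
  have parseval (y : ι → ℝ) : x ⬝ᵥ y =
      ∑ m, ((hL.eigenvectorBasis m).ofLp ⬝ᵥ x) * ((hL.eigenvectorBasis m).ofLp ⬝ᵥ y) := by
    have h := hL.eigenvectorBasis.sum_inner_mul_inner (WithLp.toLp 2 x) (WithLp.toLp 2 y)
    simp only [EuclideanSpace.inner_eq_star_dotProduct, star_trivial] at h
    rw [dotProduct_comm, ← h]
    exact Finset.sum_congr rfl fun m _ => by rw [dotProduct_comm y]
  have coord (m : ι) : (hL.eigenvectorBasis m).ofLp ⬝ᵥ (L *ᵥ x) =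
      hL.eigenvalues m * ((hL.eigenvectorBasis m).ofLp ⬝ᵥ x) := by
    have hT : Lᵀ = L := (conjTranspose_eq_transpose_of_trivial L).symm.trans hL.eq
    rw [dotProduct_mulVec, ← mulVec_transpose, hT, hL.mulVec_eigenvectorBasis, smul_dotProduct,
      smul_eq_mul]
  rw [parseval (L *ᵥ x), parseval x, Finset.mul_sum, ← Finset.sum_sub_distrib]
  refine Finset.sum_congr rfl fun m _ => ?_
  rw [coord]
  ring

/-- A vector orthogonal to all eigenvectors with eigenvalue at most `μ`, whose Rayleigh quotient
is at most `μ`, vanishes. -/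
theorem Matrix.IsHermitian.eq_zero_of_dotProduct_mulVec_le {ι : Type*} [Fintype ι]
    [DecidableEq ι] {L : Matrix ι ι ℝ} (hL : L.IsHermitian) {μ : ℝ} {x : ι → ℝ}
    (hx : ∀ m, hL.eigenvalues m ≤ μ → (hL.eigenvectorBasis m).ofLp ⬝ᵥ x = 0)
    (hle : x ⬝ᵥ (L *ᵥ x) ≤ μ * (x ⬝ᵥ x)) : x = 0 := by
  have hnonneg : ∀ m ∈ Finset.univ,
      0 ≤ (hL.eigenvalues m - μ) * ((hL.eigenvectorBasis m).ofLp ⬝ᵥ x) ^ 2 := by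
    intro m _
    rcases le_or_gt (hL.eigenvalues m) μ with h | h
    · simp [hx m h]
    · exact mul_nonneg (sub_pos.2 h).le (sq_nonneg _)
  have hsum := hL.dotProduct_mulVec_sub_eq_sum μ x
  have hzero := (Finset.sum_eq_zero_iff_of_nonneg hnonneg).1
    (le_antisymm (by linarith) (Finset.sum_nonneg hnonneg))
  have hcoord (m : ι) : (hL.eigenvectorBasis m).ofLp ⬝ᵥ x = 0 := by
    rcases le_or_gt (hL.eigenvalues m) μ with h | h
    · exact hx m h
    · simpa [(sub_pos.2 h).ne'] using hzero m (Finset.mem_univ m)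
  have hself := hL.dotProduct_mulVec_sub_eq_sum (μ - 1) x
  simp only [hcoord, ne_eq, OfNat.ofNat_ne_zero, not_false_eq_true, zero_pow, mul_zero,
    Finset.sum_const_zero] at hself hsum
  exact dotProduct_self_eq_zero.1 (by linarith)

/-- If `f` is an eigenvector of a symmetric matrix `L`, then the quadratic form of `L - μ` at the
pointwise product `c * f` only involves differences of the values of `c`. -/
theorem dotProduct_mulVec_mul_eigenvector {ι : Type*} [Fintype ι] {L : Matrix ι ι ℝ}
    (hL : L.IsSymm) {μ : ℝ} {f : ι → ℝ} (hf : L *ᵥ f = μ • f) (c : ι → ℝ) :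
    2 * ((c * f) ⬝ᵥ (L *ᵥ (c * f)) - μ * ((c * f) ⬝ᵥ (c * f))) =
      -∑ i, ∑ j, L i j * (f i * f j) * (c i - c j) ^ 2 := by
  have hquad : (c * f) ⬝ᵥ (L *ᵥ (c * f)) = ∑ i, ∑ j, L i j * (f i * f j) * (c i * c j) := by
    simp only [dotProduct, mulVec, Finset.mul_sum, Pi.mul_apply]
    exact Finset.sum_congr rfl fun i _ => Finset.sum_congr rfl fun j _ => by ring
  have hnorm : μ * ((c * f) ⬝ᵥ (c * f)) = ∑ i, ∑ j, L i j * (f i * f j) * c i ^ 2 := by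
    simp only [dotProduct, Finset.mul_sum, Pi.mul_apply]
    refine Finset.sum_congr rfl fun i _ => ?_
    have hi : ∑ j, L i j * f j = μ * f i := congrFun hf i
    calc μ * (c i * f i * (c i * f i)) = c i ^ 2 * f i * (μ * f i) := by ring
      _ = _ := by
        rw [← hi, Finset.mul_sum]
        exact Finset.sum_congr rfl fun j _ => by ring
  have hnorm' : μ * ((c * f) ⬝ᵥ (c * f)) = ∑ i, ∑ j, L i j * (f i * f j) * c j ^ 2 := by
    rw [hnorm, Finset.sum_comm]
    refine Finset.sum_congr rfl fun i _ => Finset.sum_congr rfl fun j _ => ?_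
    rw [hL.apply i j]
    ring
  calc _ = 2 * ((c * f) ⬝ᵥ (L *ᵥ (c * f))) - μ * ((c * f) ⬝ᵥ (c * f))
          - μ * ((c * f) ⬝ᵥ (c * f)) := by ring
    _ = 2 * (∑ i, ∑ j, L i j * (f i * f j) * (c i * c j))
          - (∑ i, ∑ j, L i j * (f i * f j) * c i ^ 2)
          - ∑ i, ∑ j, L i j * (f i * f j) * c j ^ 2 := by rw [hquad, ← hnorm, ← hnorm']
    _ = _ := by
      simp only [Finset.mul_sum, ← Finset.sum_sub_distrib, ← Finset.sum_neg_distrib]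
      exact Finset.sum_congr rfl fun i _ => Finset.sum_congr rfl fun j _ => by ring

theorem mul_pos_iff_neg_of_neg_left {a b : ℝ} (ha : a < 0) : 0 < a * b ↔ b < 0 := by
  simp [mul_pos_iff, ha, ha.le.not_gt]

/-- The set of vertices reachable from `i` through vertices at which `f` has the same sign as at
`i`. -/
def signComponent {n : ℕ} (A : Matrix (Fin n) (Fin n) ℝ) (f : Fin n → ℝ) (i : Fin n) :
    Set (Fin n) :=
  {j | reachIn A {k | 0 < f i * f k} i j}

theorem IsStrongNodalDomain.exists_signComponent_eq {n : ℕ} {A : Matrix (Fin n) (Fin n) ℝ}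
    {f : Fin n → ℝ} {S : Set (Fin n)} (hS : IsStrongNodalDomain A f S) :
    ∃ i, f i ≠ 0 ∧ signComponent A f i = S := by
  rcases hS with ⟨i, hi, rfl⟩ | ⟨i, hi, rfl⟩
  · refine ⟨i, hi.ne', ?_⟩
    simp only [signComponent, mul_pos_iff_of_pos_left hi]
  · refine ⟨i, hi.ne, ?_⟩
    simp only [signComponent, mul_pos_iff_neg_of_neg_left hi]

theorem signComponent_eq_of_adjRel {n : ℕ} {A : Matrix (Fin n) (Fin n) ℝ} (hA : A.IsSymm)
    {f : Fin n → ℝ} {i j : Fin n} (hadj : adjRel A i j) (hij : 0 < f i * f j) :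
    signComponent A f i = signComponent A f j := by
  have hsign : {k | 0 < f i * f k} = {k | 0 < f j * f k} := by
    ext k
    rcases mul_pos_iff.1 hij with ⟨hi, hj⟩ | ⟨hi, hj⟩
    · simp [mul_pos_iff_of_pos_left hi, mul_pos_iff_of_pos_left hj]
    · simp [mul_pos_iff_neg_of_neg_left hi, mul_pos_iff_neg_of_neg_left hj]
  have hi : i ∈ {k | 0 < f j * f k} := by simpa [mul_comm] using hij
  have hj : j ∈ {k | 0 < f j * f k} := hsign ▸ hij
  have hadj' : adjRel A j i := ⟨hadj.1.symm, by rw [hA.apply i j]; exact hadj.2⟩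
  ext k
  simp only [signComponent, hsign, Set.mem_ofPred_eq]
  exact ⟨fun h => .head ⟨hj, hi, hadj'⟩ h, fun h => .head ⟨hi, hj, hadj⟩ h⟩

/-- Extend a family of scalars indexed by strong nodal domains to a function on vertices which is
constant on each domain, and multiply by `f`. -/
noncomputable def nodalCombination {n : ℕ} (A : Matrix (Fin n) (Fin n) ℝ) (f : Fin n → ℝ) :
    ({S : Set (Fin n) | IsStrongNodalDomain A f S} → ℝ) →ₗ[ℝ] (Fin n → ℝ) := by
  classical
  exact
  { toFun := fun c =>
      (fun i => if h : IsStrongNodalDomain A f (signComponent A f i) then c ⟨_, h⟩ else 0) * f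
    map_add' := fun c c' => by
      ext i
      by_cases h : IsStrongNodalDomain A f (signComponent A f i) <;> simp [h, add_mul]
    map_smul' := fun r c => by
      ext i
      by_cases h : IsStrongNodalDomain A f (signComponent A f i) <;> simp [h, mul_assoc] }

theorem nodalCombination_injective {n : ℕ} (A : Matrix (Fin n) (Fin n) ℝ) (f : Fin n → ℝ) :
    Function.Injective (nodalCombination A f) := by
  refine (injective_iff_map_eq_zero _).2 fun c hc => ?_
  ext ⟨S, hS⟩
  obtain ⟨i, hi, rfl⟩ := IsStrongNodalDomain.exists_signComponent_eq hS
  have hci := congrFun hc i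
  have hS' : IsStrongNodalDomain A f (signComponent A f i) := hS
  simpa [nodalCombination, hi, hS'] using hci

theorem nodalCombination_dotProduct_mulVec_le {n : ℕ} {A L : Matrix (Fin n) (Fin n) ℝ}
    (hA : A.IsSymm) (hL : L.IsSymm) (hle : ∀ i j, i ≠ j → L i j ≤ 0)
    (hzero : ∀ i j, i ≠ j → ¬ 0 < A i j → L i j = 0) {μ : ℝ} {f : Fin n → ℝ}
    (hf : L *ᵥ f = μ • f) (c : {S : Set (Fin n) | IsStrongNodalDomain A f S} → ℝ) :
    nodalCombination A f c ⬝ᵥ (L *ᵥ nodalCombination A f c) ≤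
      μ * (nodalCombination A f c ⬝ᵥ nodalCombination A f c) := by
  classical
  set e : Fin n → ℝ := fun i =>
    if h : IsStrongNodalDomain A f (signComponent A f i) then c ⟨_, h⟩ else 0 with he
  have hce : nodalCombination A f c = e * f := rfl
  have hterm (i j : Fin n) : 0 ≤ L i j * (f i * f j) * (e i - e j) ^ 2 := by
    rcases eq_or_ne i j with rfl | hij
    · simp
    by_cases hpos : 0 < A i j
    · by_cases hfij : 0 < f i * f j
      · have : e i = e j := by
          simp only [he, signComponent_eq_of_adjRel hA ⟨hij, hpos⟩ hfij]
        simp [this]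
      · exact mul_nonneg (mul_nonneg_of_nonpos_of_nonpos (hle i j hij) (not_lt.1 hfij))
          (sq_nonneg _)
    · simp [hzero i j hij hpos]
  have hsum := Finset.sum_nonneg fun i (_ : i ∈ Finset.univ) =>
    Finset.sum_nonneg fun j (_ : j ∈ Finset.univ) => hterm i j
  have hquad := dotProduct_mulVec_mul_eigenvector hL hf e
  rw [hce]
  linarith

/-- **Discrete nodal domain theorem.** If the weighted graph `G` is connected
and `f` is an eigenvector of the normalized Laplacian `L` with eigenvalue `λ`, then the
number of strong nodal domains of `f` is at most the number of eigenvalues of `L`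
(counted with multiplicity) that are not greater than `λ`. -/
theorem discrete_nodal_domain_theorem
    (n : ℕ) (hn : 1 ≤ n) (A : Matrix (Fin n) (Fin n) ℝ)
    (hsymm : A.IsSymm) (hnonneg : ∀ i j, 0 ≤ A i j)
    (d : Fin n → ℝ) (hd : ∀ i, d i = ∑ j, A i j) (hdpos : ∀ i, 0 < d i)
    (L : Matrix (Fin n) (Fin n) ℝ)
    (hLdef : L = 1 - (Matrix.diagonal fun i => (Real.sqrt (d i))⁻¹) * A *
      (Matrix.diagonal fun i => (Real.sqrt (d i))⁻¹))
    (hL : L.IsHermitian)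
    (hconn : ∀ i j : Fin n, Relation.ReflTransGen (adjRel A) i j)
    (lam : ℝ) (f : Fin n → ℝ) (hf : f ≠ 0) (heig : L *ᵥ f = lam • f) :
    Set.ncard {S : Set (Fin n) | IsStrongNodalDomain A f S} ≤
      (Finset.univ.filter fun m => hL.eigenvalues m ≤ lam).card := by
  classical
  have hLsymm : L.IsSymm := (conjTranspose_eq_transpose_of_trivial L).symm.trans hL.eq
  have hentry (i j : Fin n) (hij : i ≠ j) : L i j = -((√(d i))⁻¹ * A i j * (√(d j))⁻¹) := by
    simp [hLdef, one_apply_ne hij, mul_diagonal, diagonal_mul]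
  have hle (i j : Fin n) (hij : i ≠ j) : L i j ≤ 0 := by
    have := hnonneg i j
    rw [hentry i j hij, neg_nonpos]
    positivity
  have hzero (i j : Fin n) (hij : i ≠ j) (h : ¬ 0 < A i j) : L i j = 0 := by
    simp [hentry i j hij, le_antisymm (not_lt.1 h) (hnonneg i j)]
  let E : Matrix {m // hL.eigenvalues m ≤ lam} (Fin n) ℝ :=
    Matrix.of fun m => (hL.eigenvectorBasis m.1).ofLp
  have hinj : Function.Injective (E.mulVecLin ∘ₗ nodalCombination A f) := by
    refine (injective_iff_map_eq_zero _).2 fun c hc => nodalCombination_injective A f ?_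
    rw [map_zero]
    exact hL.eq_zero_of_dotProduct_mulVec_le (fun m hm => congrFun hc ⟨m, hm⟩)
      (nodalCombination_dotProduct_mulVec_le hsymm hLsymm hle hzero heig c)
  have hrank := LinearMap.finrank_le_finrank_of_injective hinj
  rwa [Module.finrank_fintype_fun_eq_card, Module.finrank_fintype_fun_eq_card,
    ← Nat.card_eq_fintype_card, Nat.card_coe_set_eq, Fintype.card_subtype] at hrank
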